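/- For every ε > 0 there exists a compact linear operator K_ε on the separable infinite-dimensional complex Hilbert space ℓ²(ℕ, ℂ) with ‖K_ε‖ < ε such that I + K_ε is distributionally chaotic. -/

import Mathlib

open Filter Topology MeasureTheory
open scoped Classical ENNReal

noncomputable def distFreq {X : Type*} [MetricSpace X] (f : X → X) (x y : X) (τ : ℝ) (n : ℕ) : ℝ :=
  (((Finset.range n).filter fun i => dist (f^[i] x) (f^[i] y) < τ).card : ℝ) / n

def DistributionallyChaoticPair {X : Type*} [MetricSpace X] (f : X → X) (x y : X) : Prop :=
  (∀ τ : ℝ, 0 < τ → Filter.limsup (distFreq f x y τ) Filter.atTop = 1) ∧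
  (∃ ε : ℝ, 0 < ε ∧ Filter.liminf (distFreq f x y ε) Filter.atTop = 0)

def DistributionallyChaotic {X : Type*} [MetricSpace X] (f : X → X) : Prop :=
  ∃ Λ : Set X, ¬Λ.Countable ∧
    ∀ x ∈ Λ, ∀ y ∈ Λ, x ≠ y → DistributionallyChaoticPair f x y

def LiYorkePair {X : Type*} [MetricSpace X] (f : X → X) (x y : X) : Prop :=
  0 < Filter.limsup (fun n => edist (f^[n] x) (f^[n] y)) Filter.atTop ∧
  Filter.liminf (fun n => edist (f^[n] x) (f^[n] y)) Filter.atTop = 0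

def LiYorkeChaotic {X : Type*} [MetricSpace X] (f : X → X) : Prop :=
  ∃ Γ : Set X, ¬Γ.Countable ∧ ∀ x ∈ Γ, ∀ y ∈ Γ, x ≠ y → LiYorkePair f x y

def NormUnimodal {X : Type*} [NormedAddCommGroup X] [NormedSpace ℂ X] (T : X →L[ℂ] X) : Prop :=
  ∃ r : ℝ, 1 < r ∧ ∀ m : ℕ, ∃ x : X, x ≠ 0 ∧
    Filter.Tendsto (fun k => ‖(T ^ k) x‖) Filter.atTop (nhds 0) ∧
    ∀ i : ℕ, 1 ≤ i → i ≤ m → r ^ i * ‖x‖ ≤ ‖(T ^ i) x‖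

/-!
In any infinite-dimensional space pick planes with bases `uⱼ, vⱼ` from a biorthogonal system, and
let `T` act on the `j`-th plane as the Jordan block `exp (-1 / qⱼ) • !![1, 1 / Dⱼ; 0, 1]`. Such a
block first grows linearly, over a time much longer than it takes to become visible, and then
decays. It differs from the identity by at most a multiple of `1 / Dⱼ`, so if `Dⱼ` grows fast
enough then `T - 1` is a norm-convergent sum of finite rank operators, as small as desired.
Let `x = ∑ 4⁻ʲ vⱼ`. If moreover `Dⱼ₊₁` exceeds the time at which the `j`-th block has long faded
out, then `‖Tᵏ x‖` is bounded below on windows `[n, (j + 1) n)`, where the `j`-th block is large,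
and tends to zero along windows of the same shape, where the first blocks have decayed and the
others have not yet moved. Hence the pair `(x, 0)` is distributionally chaotic, and by linearity so
is every pair of distinct scalar multiples of `x`.
-/

namespace DistributionalChaos

section Frequency

lemma limsup_eq_of_tendsto_comp {α ι κ : Type*} [ConditionallyCompleteLinearOrder α]
    [TopologicalSpace α] [OrderTopology α] {l : Filter ι} {l' : Filter κ} [l'.NeBot]
    {u : ι → α} {φ : κ → ι} {a : α} (hφ : Tendsto φ l' l) (hu : Tendsto (u ∘ φ) l' (𝓝 a))
    (hle : ∀ᶠ i in l, u i ≤ a) : limsup u l = a := by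
  have hcobdd : IsCoboundedUnder (· ≤ ·) (map φ l') u := hu.isCoboundedUnder_le
  apply le_antisymm (limsup_le_of_le (IsCobounded.mono (map_mono hφ) hcobdd) hle)
  calc a = limsup u (map φ l') := hu.limsup_eq.symm
    _ ≤ limsup u l := limsup_le_limsup_of_le hφ hcobdd ⟨a, hle⟩

lemma liminf_eq_of_tendsto_comp {α ι κ : Type*} [ConditionallyCompleteLinearOrder α]
    [TopologicalSpace α] [OrderTopology α] {l : Filter ι} {l' : Filter κ} [l'.NeBot]
    {u : ι → α} {φ : κ → ι} {a : α} (hφ : Tendsto φ l' l) (hu : Tendsto (u ∘ φ) l' (𝓝 a))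
    (hge : ∀ᶠ i in l, a ≤ u i) : liminf u l = a :=
  limsup_eq_of_tendsto_comp (α := αᵒᵈ) hφ hu hge

variable {X : Type*} [MetricSpace X] {f : X → X} {x y : X} {τ : ℝ}

lemma distFreq_nonneg (n : ℕ) : 0 ≤ distFreq f x y τ n := by
  unfold distFreq
  positivity

lemma distFreq_le_one (n : ℕ) : distFreq f x y τ n ≤ 1 := by
  refine div_le_one_of_le₀ ?_ n.cast_nonneg
  exact_mod_cast (Finset.card_filter_le _ _).trans (Finset.card_range n).le

lemma sub_div_le_distFreq {a n : ℕ} (h : ∀ i ∈ Set.Ico a n, dist (f^[i] x) (f^[i] y) < τ) :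
    ((n : ℝ) - a) / n ≤ distFreq f x y τ n := by
  have hsub : Finset.Ico a n ⊆ (Finset.range n).filter fun i => dist (f^[i] x) (f^[i] y) < τ :=
    fun i hi => Finset.mem_filter.2
      ⟨Finset.mem_range.2 (Finset.mem_Ico.1 hi).2, h i (Finset.mem_Ico.1 hi)⟩
  have hcard := Finset.card_le_card hsub
  rw [Nat.card_Ico, Nat.sub_le_iff_le_add] at hcard
  refine div_le_div_of_nonneg_right ?_ n.cast_nonneg
  rw [sub_le_iff_le_add]
  exact_mod_cast hcard

lemma distFreq_le_div {a n : ℕ} (h : ∀ i ∈ Set.Ico a n, τ ≤ dist (f^[i] x) (f^[i] y)) :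
    distFreq f x y τ n ≤ a / n := by
  have hsub : ((Finset.range n).filter fun i => dist (f^[i] x) (f^[i] y) < τ) ⊆
      Finset.range a := by
    intro i hi
    rw [Finset.mem_filter, Finset.mem_range] at hi
    by_contra hia
    exact (h i ⟨not_lt.1 (Finset.mem_range.not.1 hia), hi.1⟩).not_gt hi.2
  have hcard := Finset.card_le_card hsub
  rw [Finset.card_range] at hcard
  exact div_le_div_of_nonneg_right (by exact_mod_cast hcard) n.cast_nonneg

lemma tendsto_succ_mul_atTop {m : ℕ → ℕ} (hm : ∀ j, 0 < m j) :
    Tendsto (fun j => (j + 1) * m j) atTop atTop :=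
  tendsto_atTop_mono (fun j => j.le_succ.trans (Nat.le_mul_of_pos_right _ (hm j))) tendsto_id

lemma cast_div_cast_succ_mul {m : ℕ} (hm : 0 < m) (j : ℕ) :
    (m : ℝ) / ((j + 1) * m : ℕ) = 1 / ((j : ℝ) + 1) := by
  have : (m : ℝ) ≠ 0 := by exact_mod_cast hm.ne'
  push_cast
  field_simp

lemma limsup_distFreq_eq_one_of_windows {m : ℕ → ℕ} {b : ℕ → ℝ} (hm : ∀ j, 0 < m j)
    (hb : Tendsto b atTop (𝓝 0))
    (hclose : ∀ j, ∀ i ∈ Set.Ico (m j) ((j + 1) * m j), dist (f^[i] x) (f^[i] y) ≤ b j)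
    (hτ : 0 < τ) : limsup (distFreq f x y τ) atTop = 1 := by
  refine limsup_eq_of_tendsto_comp (tendsto_succ_mul_atTop hm) ?_ (.of_forall distFreq_le_one)
  have hlim : Tendsto (fun j : ℕ => 1 - 1 / ((j : ℝ) + 1)) atTop (𝓝 1) := by
    simpa only [sub_zero] using (tendsto_one_div_add_atTop_nhds_zero_nat (𝕜 := ℝ)).const_sub 1
  refine tendsto_of_tendsto_of_tendsto_of_le_of_le' hlim tendsto_const_nhds ?_
    (.of_forall fun j => distFreq_le_one _)
  filter_upwards [hb.eventually (gt_mem_nhds hτ)] with j hj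
  have hpos : (((j + 1) * m j : ℕ) : ℝ) ≠ 0 := by
    exact_mod_cast (Nat.mul_pos j.succ_pos (hm j)).ne'
  calc 1 - 1 / ((j : ℝ) + 1) = (((j + 1) * m j : ℕ) - (m j : ℝ)) / ((j + 1) * m j : ℕ) := by
        rw [sub_div, div_self hpos, cast_div_cast_succ_mul (hm j)]
    _ ≤ distFreq f x y τ ((j + 1) * m j) :=
        sub_div_le_distFreq fun i hi => (hclose j i hi).trans_lt hj

lemma liminf_distFreq_eq_zero_of_windows {n : ℕ → ℕ} (hn : ∀ j, 0 < n j)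
    (hfar : ∀ j, ∀ i ∈ Set.Ico (n j) ((j + 1) * n j), τ ≤ dist (f^[i] x) (f^[i] y)) :
    liminf (distFreq f x y τ) atTop = 0 := by
  refine liminf_eq_of_tendsto_comp (tendsto_succ_mul_atTop hn) ?_ (.of_forall distFreq_nonneg)
  refine squeeze_zero (fun j => distFreq_nonneg _) (fun j => ?_)
    (tendsto_one_div_add_atTop_nhds_zero_nat (𝕜 := ℝ))
  exact (distFreq_le_div (hfar j)).trans_eq (cast_div_cast_succ_mul (hn j) j)

lemma not_distributionallyChaoticPair_self (f : X → X) (x : X) :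
    ¬DistributionallyChaoticPair f x x := by
  rintro ⟨-, c, hc, hfar⟩
  have hone : distFreq f x x c =ᶠ[atTop] fun _ => 1 := by
    filter_upwards [eventually_ne_atTop 0] with n hn
    simp [distFreq, hc, hn]
  rw [liminf_congr hone, liminf_const] at hfar
  exact one_ne_zero hfar

end Frequency

section Linear

variable {𝕜 E : Type*} [NontriviallyNormedField 𝕜] [NormedAddCommGroup E] [NormedSpace 𝕜 E]

lemma dist_iterate_smul_smul (T : E →ₗ[𝕜] E) (x : E) (r s : 𝕜) (i : ℕ) :
    dist (T^[i] (r • x)) (T^[i] (s • x)) = ‖r - s‖ * dist (T^[i] x) (T^[i] 0) := by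
  simp only [← Module.End.coe_pow, map_smul, map_zero, dist_eq_norm, sub_zero, ← sub_smul,
    norm_smul]

lemma distFreq_smul_smul (T : E →ₗ[𝕜] E) (x : E) {r s : 𝕜} (hrs : r ≠ s) (τ : ℝ) :
    distFreq T (r • x) (s • x) τ = distFreq T x 0 (τ / ‖r - s‖) := by
  funext n
  simp only [distFreq, dist_iterate_smul_smul, lt_div_iff₀' (norm_sub_pos_iff.2 hrs)]

lemma distributionallyChaoticPair_smul_smul {T : E →ₗ[𝕜] E} {x : E}
    (hx : DistributionallyChaoticPair T x 0) {r s : 𝕜} (hrs : r ≠ s) :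
    DistributionallyChaoticPair T (r • x) (s • x) := by
  have hpos : 0 < ‖r - s‖ := norm_sub_pos_iff.2 hrs
  obtain ⟨hclose, c, hc, hfar⟩ := hx
  refine ⟨fun τ hτ => ?_, c * ‖r - s‖, mul_pos hc hpos, ?_⟩
  · rw [distFreq_smul_smul T x hrs]
    exact hclose _ (div_pos hτ hpos)
  · rwa [distFreq_smul_smul T x hrs, mul_div_cancel_right₀ c hpos.ne']

lemma distributionallyChaotic_of_pair_zero [CompleteSpace 𝕜] {T : E →ₗ[𝕜] E} {x : E}
    (hx : DistributionallyChaoticPair T x 0) : DistributionallyChaotic T := by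
  have hx0 : x ≠ 0 := by
    rintro rfl
    exact not_distributionallyChaoticPair_self T 0 hx
  refine ⟨Set.range fun r : 𝕜 => r • x, ?_, ?_⟩
  · intro hcount
    rw [← Set.image_univ] at hcount
    have huniv := Set.countable_of_injective_of_countable_image
      (smul_left_injective 𝕜 hx0).injOn hcount
    rw [← Cardinal.le_aleph0_iff_set_countable, Cardinal.mk_univ] at huniv
    exact (Cardinal.aleph0_lt_continuum.trans_le
      (continuum_le_cardinal_of_nontriviallyNormedField 𝕜)).not_ge huniv
  · rintro _ ⟨r, rfl⟩ _ ⟨s, rfl⟩ hrs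
    exact distributionallyChaoticPair_smul_smul hx (ne_of_apply_ne (· • x) hrs)

lemma distributionallyChaotic_of_norm_windows [CompleteSpace 𝕜] {T : E →L[𝕜] E} {x : E}
    {m n : ℕ → ℕ} {b : ℕ → ℝ} {c : ℝ} (hm : ∀ j, 0 < m j) (hn : ∀ j, 0 < n j)
    (hb : Tendsto b atTop (𝓝 0)) (hc : 0 < c)
    (hsmall : ∀ j, ∀ k ∈ Set.Ico (m j) ((j + 1) * m j), ‖(T ^ k) x‖ ≤ b j)
    (hlarge : ∀ j, ∀ k ∈ Set.Ico (n j) ((j + 1) * n j), c ≤ ‖(T ^ k) x‖) :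
    DistributionallyChaotic T := by
  have hdist (k : ℕ) : dist (T^[k] x) (T^[k] 0) = ‖(T ^ k) x‖ := by
    rw [← FunLike.coe_pow_eq_iterate, map_zero, dist_zero_right]
  simp only [← hdist] at hsmall hlarge
  exact distributionallyChaotic_of_pair_zero (T := T.toLinearMap)
    ⟨fun _ => limsup_distFreq_eq_one_of_windows hm hb hsmall, c, hc,
      liminf_distFreq_eq_zero_of_windows hn hlarge⟩

end Linear
section Biorthogonal

variable {ι 𝕜 E : Type*} [RCLike 𝕜] [NormedAddCommGroup E] [NormedSpace 𝕜 E]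

/-- A biorthogonal system: vectors `e i` with continuous coordinate functionals `φ i`. Nothing is
required of the closed span of `e`, nor of the norms of `φ`. -/
structure IsBiorthogonal (e : ι → E) (φ : ι → StrongDual 𝕜 E) : Prop where
  apply_self : ∀ i, φ i (e i) = 1
  apply_of_ne : ∀ {i j}, i ≠ j → φ i (e j) = 0

lemma exists_mem_notMem_of_coFG {K V : Type*} [DivisionRing K] [AddCommGroup V] [Module K V]
    (hV : ¬Module.Finite K V) {W F : Submodule K V} (hW : W.CoFG) [Module.Finite K F] :
    ∃ x ∈ W, x ∉ F := by
  by_contra! hWF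
  have hF : F.CoFG := hW.of_le hWF
  have : Module.Finite K (V ⧸ F) := hF
  exact hV (Module.Finite.of_submodule_quotient F)

lemma exists_dual_eq_one_of_notMem {F : Submodule 𝕜 E} [IsClosed (F : Set E)] {x : E}
    (hx : x ∉ F) : ∃ f : StrongDual 𝕜 E, f x = 1 ∧ ∀ y ∈ F, f y = 0 := by
  have hmk : F.mkQL x ≠ 0 := by
    simpa only [Submodule.mkQL_apply, Submodule.mkQ_apply, ne_eq,
      Submodule.Quotient.mk_eq_zero] using hx
  obtain ⟨f, hf⟩ := SeparatingDual.exists_eq_one (R := 𝕜) hmk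
  refine ⟨f.comp F.mkQL, hf, fun y hy => ?_⟩
  have hy0 : F.mkQL y = 0 := (Submodule.Quotient.mk_eq_zero F).2 hy
  rw [ContinuousLinearMap.comp_apply, hy0, map_zero]

lemma exists_unit_vector_dual_extending (hE : ¬FiniteDimensional 𝕜 E)
    (s : Finset (E × StrongDual 𝕜 E)) :
    ∃ (x : E) (f : StrongDual 𝕜 E), ‖x‖ = 1 ∧ f x = 1 ∧ ∀ p ∈ s, p.2 x = 0 ∧ f p.1 = 0 := by
  let evalDuals : E →ₗ[𝕜] s → 𝕜 := LinearMap.pi fun p => p.1.2.toLinearMap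
  let F : Submodule 𝕜 E := Submodule.span 𝕜 (s.image Prod.fst)
  have : IsClosed (F : Set E) := F.closed_of_finiteDimensional
  obtain ⟨x, hxker, hxF⟩ :=
    exists_mem_notMem_of_coFG hE (Submodule.CoFG.ker evalDuals) (F := F)
  obtain ⟨f, hfx, hfF⟩ := exists_dual_eq_one_of_notMem hxF
  have hx : x ≠ 0 := fun h => hxF (h ▸ F.zero_mem)
  refine ⟨(‖x‖⁻¹ : 𝕜) • x, (‖x‖ : 𝕜) • f, norm_smul_inv_norm hx, ?_, fun p hp => ⟨?_, ?_⟩⟩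
  · have hnorm : (‖x‖ : 𝕜) ≠ 0 := by simpa using hx
    rw [map_smul, smul_apply, hfx, smul_eq_mul, smul_eq_mul, mul_one, inv_mul_cancel₀ hnorm]
  · rw [map_smul, show p.2 x = 0 from congrFun (LinearMap.mem_ker.1 hxker) ⟨p, hp⟩, smul_zero]
  · have hpF : p.1 ∈ F := Submodule.subset_span (Finset.mem_coe.2 (Finset.mem_image_of_mem _ hp))
    rw [smul_apply, hfF _ hpF, smul_zero]

lemma exists_isBiorthogonal_nat (hE : ¬FiniteDimensional 𝕜 E) :
    ∃ (e : ℕ → E) (φ : ℕ → StrongDual 𝕜 E), (∀ n, ‖e n‖ = 1) ∧ IsBiorthogonal e φ := by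
  obtain ⟨p, hunit, hortho⟩ := exists_seq_of_forall_finset_exists
    (fun p : E × StrongDual 𝕜 E => ‖p.1‖ = 1 ∧ p.2 p.1 = 1)
    (fun p q => p.2 q.1 = 0 ∧ q.2 p.1 = 0) fun s _ => by
      obtain ⟨x, f, hx, hfx, hs⟩ := exists_unit_vector_dual_extending hE s
      exact ⟨(x, f), ⟨hx, hfx⟩, hs⟩
  refine ⟨fun n => (p n).1, fun n => (p n).2, fun n => (hunit n).1, fun n => (hunit n).2, ?_⟩
  intro i j hij
  rcases hij.lt_or_gt with hlt | hgt
  exacts [(hortho i j hlt).1, (hortho j i hgt).2]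

lemma IsBiorthogonal.comp {κ : Type*} {e : ι → E} {φ : ι → StrongDual 𝕜 E}
    (h : IsBiorthogonal e φ) {g : κ → ι} (hg : Function.Injective g) :
    IsBiorthogonal (e ∘ g) (φ ∘ g) :=
  ⟨fun i => h.apply_self (g i), fun hij => h.apply_of_ne (hg.ne hij)⟩

lemma exists_isBiorthogonal (ι : Type*) [Countable ι] (hE : ¬FiniteDimensional 𝕜 E) :
    ∃ (e : ι → E) (φ : ι → StrongDual 𝕜 E), (∀ i, ‖e i‖ = 1) ∧ IsBiorthogonal e φ := by
  obtain ⟨e, φ, hunit, h⟩ := exists_isBiorthogonal_nat hE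
  obtain ⟨g, hg⟩ := exists_injective_nat ι
  exact ⟨e ∘ g, φ ∘ g, fun i => hunit (g i), h.comp hg⟩

end Biorthogonal

section Compact

variable {ι 𝕜 E F : Type*} [NontriviallyNormedField 𝕜] [NormedAddCommGroup E] [NormedSpace 𝕜 E]
  [NormedAddCommGroup F] [NormedSpace 𝕜 F]

lemma isCompactOperator_smulRight [LocallyCompactSpace 𝕜] (f : StrongDual 𝕜 E) (u : F) :
    IsCompactOperator (f.smulRight u) :=
  (isCompactOperator_of_locallyCompactSpace_dom f).clm_comp
    (ContinuousLinearMap.toSpanSingleton 𝕜 u)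

lemma isCompactOperator_tsum [CompleteSpace F] {K : ι → E →L[𝕜] F}
    (hK : ∀ i, IsCompactOperator (K i)) (hsum : Summable K) :
    IsCompactOperator (∑' i, K i : E →L[𝕜] F) :=
  isCompactOperator_of_tendsto hsum.hasSum <| .of_forall fun _ =>
    (compactOperator (RingHom.id 𝕜) E F).sum_mem fun i _ => hK i

end Compact

section Jordan

variable {ι 𝕜 E : Type*} [RCLike 𝕜] [NormedAddCommGroup E] [NormedSpace 𝕜 E]

/-- `T` leaves each plane spanned by `e (inl i)` and `e (inr i)` invariant and acts on it, in this
basis, as the Jordan block `a i • !![1, d i; 0, 1]`. -/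
structure HasJordanBlocks (T : E →L[𝕜] E) (e : ι ⊕ ι → E) (a d : ι → 𝕜) : Prop where
  apply_inl : ∀ i, T (e (.inl i)) = a i • e (.inl i)
  apply_inr : ∀ i, T (e (.inr i)) = a i • (e (.inr i) + d i • e (.inl i))

/-- The operator `K i` of finite rank for which `1 + K i` acts as `a i • !![1, d i; 0, 1]` on the
plane with basis `e (inl i)`, `e (inr i)` and fixes the joint kernel of the two functionals
`φ (inl i)`, `φ (inr i)`, which are meant to be biorthogonal to that basis. -/
noncomputable def jordanPerturbation (e : ι ⊕ ι → E) (φ : ι ⊕ ι → StrongDual 𝕜 E) (a d : ι → 𝕜)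
    (i : ι) : E →L[𝕜] E :=
  (a i - 1) • ((φ (.inl i)).smulRight (e (.inl i)) + (φ (.inr i)).smulRight (e (.inr i))) +
    (a i * d i) • (φ (.inr i)).smulRight (e (.inl i))

section jordanPerturbation

variable (e : ι ⊕ ι → E) (φ : ι ⊕ ι → StrongDual 𝕜 E) (a d : ι → 𝕜) (i : ι)

lemma jordanPerturbation_apply (x : E) :
    jordanPerturbation e φ a d i x =
      (a i - 1) • (φ (.inl i) x • e (.inl i) + φ (.inr i) x • e (.inr i)) +
        (a i * d i) • φ (.inr i) x • e (.inl i) := rfl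

lemma isCompactOperator_jordanPerturbation : IsCompactOperator (jordanPerturbation e φ a d i) :=
  (((isCompactOperator_smulRight _ _).add (isCompactOperator_smulRight _ _)).smul (a i - 1)).add
    ((isCompactOperator_smulRight _ _).smul (a i * d i))

lemma norm_jordanPerturbation_le :
    ‖jordanPerturbation e φ a d i‖ ≤
      ‖a i - 1‖ * (‖φ (.inl i)‖ * ‖e (.inl i)‖ + ‖φ (.inr i)‖ * ‖e (.inr i)‖) +
        ‖a i * d i‖ * (‖φ (.inr i)‖ * ‖e (.inl i)‖) := by
  simp only [← ContinuousLinearMap.norm_smulRight_apply]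
  refine (norm_add_le _ _).trans ?_
  rw [norm_smul, norm_smul]
  gcongr
  exact norm_add_le _ _

end jordanPerturbation

lemma IsBiorthogonal.hasJordanBlocks_one_add_tsum {e : ι ⊕ ι → E} {φ : ι ⊕ ι → StrongDual 𝕜 E}
    (h : IsBiorthogonal e φ) {a d : ι → 𝕜} (hsum : Summable (jordanPerturbation e φ a d)) :
    HasJordanBlocks (1 + ∑' i, jordanPerturbation e φ a d i) e a d := by
  have happly (x : E) : (∑' i, jordanPerturbation e φ a d i) x =
      ∑' i, jordanPerturbation e φ a d i x :=
    (ContinuousLinearMap.apply 𝕜 E x).map_tsum hsum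
  constructor <;> intro i
  · have hoff (j : ι) (hj : j ≠ i) : jordanPerturbation e φ a d j (e (.inl i)) = 0 := by
      rw [jordanPerturbation_apply, h.apply_of_ne (Sum.inl_injective.ne hj),
        h.apply_of_ne Sum.inr_ne_inl]
      module
    rw [add_apply, one_apply_eq_self, happly, tsum_eq_single i hoff,
      jordanPerturbation_apply, h.apply_self, h.apply_of_ne Sum.inr_ne_inl]
    module
  · have hoff (j : ι) (hj : j ≠ i) : jordanPerturbation e φ a d j (e (.inr i)) = 0 := by
      rw [jordanPerturbation_apply, h.apply_of_ne (Sum.inr_injective.ne hj),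
        h.apply_of_ne Sum.inl_ne_inr]
      module
    rw [add_apply, one_apply_eq_self, happly, tsum_eq_single i hoff,
      jordanPerturbation_apply, h.apply_self, h.apply_of_ne Sum.inl_ne_inr]
    module

lemma IsBiorthogonal.exists_compact_hasJordanBlocks [CompleteSpace E] {e : ι ⊕ ι → E}
    {φ : ι ⊕ ι → StrongDual 𝕜 E} (h : IsBiorthogonal e φ) (hunit : ∀ i, ‖e i‖ = 1)
    {a d : ι → 𝕜} {b : ι → ℝ} {B : ℝ} (hb : HasSum b B)
    (hle : ∀ i, ‖a i - 1‖ * (‖φ (.inl i)‖ + ‖φ (.inr i)‖) + ‖a i * d i‖ * ‖φ (.inr i)‖ ≤ b i) :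
    ∃ K : E →L[𝕜] E, IsCompactOperator K ∧ ‖K‖ ≤ B ∧ HasJordanBlocks (1 + K) e a d := by
  have hnorm (i : ι) : ‖jordanPerturbation e φ a d i‖ ≤ b i := by
    refine (norm_jordanPerturbation_le e φ a d i).trans ?_
    simpa only [hunit, mul_one] using hle i
  have hsum : Summable (jordanPerturbation e φ a d) := .of_norm_bounded hb.summable hnorm
  exact ⟨∑' i, jordanPerturbation e φ a d i,
    isCompactOperator_tsum (isCompactOperator_jordanPerturbation e φ a d) hsum,
    tsum_of_norm_bounded hb hnorm, h.hasJordanBlocks_one_add_tsum hsum⟩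

namespace HasJordanBlocks

variable {T : E →L[𝕜] E} {e : ι ⊕ ι → E} {a d w : ι → 𝕜}

lemma pow_apply_inl (hT : HasJordanBlocks T e a d) (k : ℕ) (i : ι) :
    (T ^ k) (e (.inl i)) = a i ^ k • e (.inl i) := by
  induction k with
  | zero => simp
  | succ k ih => rw [pow_succ, mul_apply_eq_comp, hT.apply_inl, map_smul, ih, smul_smul, pow_succ']

lemma pow_apply_inr (hT : HasJordanBlocks T e a d) (k : ℕ) (i : ι) :
    (T ^ k) (e (.inr i)) = a i ^ k • (e (.inr i) + (k * d i) • e (.inl i)) := by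
  induction k with
  | zero => simp
  | succ k ih =>
    rw [pow_succ, mul_apply_eq_comp, hT.apply_inr, map_smul, map_add, map_smul, ih,
      hT.pow_apply_inl, pow_succ]
    push_cast
    module

lemma hasSum_pow_apply (hT : HasJordanBlocks T e a d)
    (hw : Summable fun i => w i • e (.inr i)) (k : ℕ) :
    HasSum (fun i => (w i * a i ^ k) • (e (.inr i) + (k * d i) • e (.inl i)))
      ((T ^ k) (∑' i, w i • e (.inr i))) := by
  simpa only [Function.comp_def, map_smul, hT.pow_apply_inr, smul_smul]
    using hw.hasSum.mapL (T ^ k)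

lemma norm_pow_apply_le (hT : HasJordanBlocks T e a d) (hunit : ∀ i, ‖e i‖ = 1)
    (hw : Summable fun i => w i • e (.inr i)) {k : ℕ} {c : ι → ℝ} {C : ℝ} (hc : HasSum c C)
    (hle : ∀ i, ‖w i‖ * ‖a i‖ ^ k * (1 + k * ‖d i‖) ≤ c i) :
    ‖(T ^ k) (∑' i, w i • e (.inr i))‖ ≤ C := by
  rw [← (hT.hasSum_pow_apply hw k).tsum_eq]
  refine tsum_of_norm_bounded hc fun i => le_trans ?_ (hle i)
  rw [norm_smul, norm_mul, norm_pow]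
  gcongr
  refine (norm_add_le _ _).trans_eq ?_
  rw [norm_smul, norm_mul, RCLike.norm_natCast, hunit, hunit, mul_one]

lemma le_norm_mul_norm_pow_apply (hT : HasJordanBlocks T e a d) {φ : ι ⊕ ι → StrongDual 𝕜 E}
    (h : IsBiorthogonal e φ) (hw : Summable fun i => w i • e (.inr i)) (k : ℕ) (i : ι) :
    ‖w i‖ * ‖a i‖ ^ k * (k * ‖d i‖) ≤
      ‖φ (.inl i)‖ * ‖(T ^ k) (∑' i, w i • e (.inr i))‖ := by
  have hcoord : φ (.inl i) ((T ^ k) (∑' i, w i • e (.inr i))) = w i * a i ^ k * (k * d i) := by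
    refine ((hT.hasSum_pow_apply hw k).mapL (φ (.inl i))).unique ?_
    convert hasSum_single i fun j hj => ?_ using 1
    · simp [h.apply_self, h.apply_of_ne Sum.inl_ne_inr]
    · simp [h.apply_of_ne Sum.inl_ne_inr, h.apply_of_ne (Sum.inl_injective.ne hj.symm)]
  calc ‖w i‖ * ‖a i‖ ^ k * (k * ‖d i‖)
      = ‖φ (.inl i) ((T ^ k) (∑' i, w i • e (.inr i)))‖ := by
        rw [hcoord, norm_mul, norm_mul, norm_mul, norm_pow, RCLike.norm_natCast]
    _ ≤ _ := (φ (.inl i)).le_opNorm _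

end HasJordanBlocks

end Jordan

section TimeScale

variable (C D : ℕ → ℕ)

/-- When the `j`-th block, of shear `1 / D j`, starts to be visible from a coordinate of size `4⁻ʲ`
through a functional of norm at most `C j`. -/
def loudTime (j : ℕ) : ℕ := 2 * 4 ^ j * C j * D j

/-- The relaxation time of the `j`-th block. It leaves the block visible up to time
`(j + 1) * loudTime C D j`. -/
def relaxTime (j : ℕ) : ℕ := 2 * ((j + 1) * loudTime C D j)

/-- When the blocks up to the `j`-th one have faded out. -/
def quietTime (j : ℕ) : ℕ := 2 ^ (j + 1) * relaxTime C D j ^ 2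

/-- The eigenvalue `exp (-1 / q)` of the `j`-th block, where `q` is its relaxation time. -/
noncomputable def decayFactor (j : ℕ) : ℝ := Real.exp (-(1 / relaxTime C D j))

/-- The time scales of successive blocks are separated: the `j`-th quiet window is over before the
shear of any later block is noticeable. -/
structure IsSeparated : Prop where
  C_pos : ∀ j, 0 < C j
  D_pos : ∀ j, 0 < D j
  succ_mul_quietTime_le : ∀ j, (j + 1) * quietTime C D j ≤ D (j + 1)

lemma decayFactor_pow (j k : ℕ) : decayFactor C D j ^ k = Real.exp (-(k / relaxTime C D j)) := by
  rw [decayFactor, ← Real.exp_nat_mul]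
  congr 1
  ring

lemma decayFactor_nonneg (j : ℕ) : 0 ≤ decayFactor C D j := Real.exp_nonneg _

lemma decayFactor_le_one (j : ℕ) : decayFactor C D j ≤ 1 := by
  rw [decayFactor, Real.exp_le_one_iff, neg_nonpos]
  positivity

lemma abs_decayFactor_sub_one_le (j : ℕ) : |decayFactor C D j - 1| ≤ 1 / relaxTime C D j := by
  rw [abs_sub_comm, abs_of_nonneg (sub_nonneg.2 (decayFactor_le_one C D j)), sub_le_comm]
  exact Real.one_sub_le_exp_neg _

variable {C D} {i j k : ℕ}

lemma half_le_decayFactor_pow (hk : 2 * k ≤ relaxTime C D j) : 1 / 2 ≤ decayFactor C D j ^ k := by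
  have hratio : (k : ℝ) / relaxTime C D j ≤ 1 / 2 := by
    refine div_le_of_le_mul₀ (by positivity) (by norm_num) ?_
    have : (2 * k : ℝ) ≤ relaxTime C D j := by exact_mod_cast hk
    linarith
  rw [decayFactor_pow]
  linarith [Real.one_sub_le_exp_neg ((k : ℝ) / relaxTime C D j)]

lemma decayFactor_pow_mul_le (hk : 0 < k) (hq : 0 < relaxTime C D j) :
    decayFactor C D j ^ k * k ≤ 2 * relaxTime C D j ^ 2 / k := by
  have hk' : (0 : ℝ) < k := by exact_mod_cast hk
  have hq' : (0 : ℝ) < relaxTime C D j := by exact_mod_cast hq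
  have hexp := Real.quadratic_le_exp_of_nonneg (div_nonneg hk'.le hq'.le)
  have hsq : ((k : ℝ) / relaxTime C D j) ^ 2 / 2 ≤ Real.exp (k / relaxTime C D j) := by
    have : 0 < (k : ℝ) / relaxTime C D j := by positivity
    linarith
  rw [decayFactor_pow, Real.exp_neg, inv_mul_le_iff₀ (Real.exp_pos _)]
  calc (k : ℝ) = ((k : ℝ) / relaxTime C D j) ^ 2 / 2 * (2 * relaxTime C D j ^ 2 / k) := by
        field_simp
    _ ≤ _ := by gcongr

namespace IsSeparated

lemma le_loudTime (h : IsSeparated C D) (j : ℕ) : D j ≤ loudTime C D j :=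
  Nat.le_mul_of_pos_left _ (by have := h.C_pos j; positivity)

lemma two_mul_le_relaxTime (h : IsSeparated C D) (j : ℕ) : 2 * D j ≤ relaxTime C D j :=
  Nat.mul_le_mul_left 2 ((h.le_loudTime j).trans (Nat.le_mul_of_pos_left _ j.succ_pos))

lemma loudTime_pos (h : IsSeparated C D) (j : ℕ) : 0 < loudTime C D j :=
  (h.D_pos j).trans_le (h.le_loudTime j)

lemma relaxTime_pos (h : IsSeparated C D) (j : ℕ) : 0 < relaxTime C D j :=
  Nat.mul_pos two_pos (Nat.mul_pos j.succ_pos (h.loudTime_pos j))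

lemma quietTime_pos (h : IsSeparated C D) (j : ℕ) : 0 < quietTime C D j :=
  Nat.mul_pos (by positivity) (pow_pos (h.relaxTime_pos j) 2)

lemma relaxTime_le_succ (h : IsSeparated C D) (j : ℕ) : relaxTime C D j ≤ D (j + 1) :=
  calc relaxTime C D j ≤ relaxTime C D j ^ 2 := Nat.le_self_pow two_ne_zero _
    _ ≤ quietTime C D j := Nat.le_mul_of_pos_left _ (by positivity)
    _ ≤ (j + 1) * quietTime C D j := Nat.le_mul_of_pos_left _ j.succ_pos
    _ ≤ D (j + 1) := h.succ_mul_quietTime_le j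

lemma le_relaxTime (h : IsSeparated C D) (j : ℕ) : D j ≤ relaxTime C D j :=
  (Nat.le_mul_of_pos_left _ two_pos).trans (h.two_mul_le_relaxTime j)

lemma monotone (h : IsSeparated C D) : Monotone D :=
  monotone_nat_of_le_succ fun j => (h.le_relaxTime j).trans (h.relaxTime_le_succ j)

lemma monotone_relaxTime (h : IsSeparated C D) : Monotone (relaxTime C D) :=
  monotone_nat_of_le_succ fun j => (h.relaxTime_le_succ j).trans (h.le_relaxTime (j + 1))

lemma C_le_of_mem_Ico_loudTime (h : IsSeparated C D)
    (hk : k ∈ Set.Ico (loudTime C D j) ((j + 1) * loudTime C D j)) :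
    (C j : ℝ) ≤ (1 / 4) ^ j * decayFactor C D j ^ k * (k * (D j : ℝ)⁻¹) := by
  have hD : (0 : ℝ) < D j := by exact_mod_cast h.D_pos j
  have hloud : 2 * 4 ^ j * (C j : ℝ) * D j ≤ k := by exact_mod_cast hk.1
  have hdecay : 1 / 2 ≤ decayFactor C D j ^ k :=
    half_le_decayFactor_pow (Nat.mul_le_mul_left 2 hk.2.le)
  calc (C j : ℝ) = (1 / 4) ^ j * (1 / 2) * ((2 * 4 ^ j * C j * D j) * (D j : ℝ)⁻¹) := by
        rw [one_div_pow]
        field_simp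
    _ ≤ _ := by gcongr

lemma decayFactor_pow_mul_le_of_quietTime_le (h : IsSeparated C D) (hij : i ≤ j)
    (hk : quietTime C D j ≤ k) :
    decayFactor C D i ^ k * k ≤ (1 / 2) ^ j := by
  have hq : (0 : ℝ) < relaxTime C D j := by exact_mod_cast h.relaxTime_pos j
  have hk' : 2 ^ (j + 1) * (relaxTime C D j : ℝ) ^ 2 ≤ k := by exact_mod_cast hk
  have hmono : (relaxTime C D i : ℝ) ≤ relaxTime C D j := by
    exact_mod_cast h.monotone_relaxTime hij
  calc decayFactor C D i ^ k * k ≤ 2 * relaxTime C D i ^ 2 / k :=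
        decayFactor_pow_mul_le ((h.quietTime_pos j).trans_le hk) (h.relaxTime_pos i)
    _ ≤ 2 * relaxTime C D j ^ 2 / (2 ^ (j + 1) * relaxTime C D j ^ 2) := by gcongr
    _ = (1 / 2) ^ j := by
        rw [one_div_pow]
        field_simp
        ring

lemma block_growth_le_of_mem_Ico_quietTime (h : IsSeparated C D)
    (hk : k ∈ Set.Ico (quietTime C D j) ((j + 1) * quietTime C D j)) (i : ℕ) :
    (1 / 4) ^ i * decayFactor C D i ^ k * (1 + k * (D i : ℝ)⁻¹) ≤
      2 * (1 / 2) ^ j * (1 / 2) ^ i := by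
  have hD : (1 : ℝ) ≤ D i := by exact_mod_cast h.D_pos i
  have hdecay : 0 ≤ decayFactor C D i ^ k := pow_nonneg (decayFactor_nonneg C D i) k
  rcases le_or_gt i j with hij | hji
  · have hone : (1 : ℝ) ≤ k := by exact_mod_cast (h.quietTime_pos j).trans_le hk.1
    calc (1 / 4) ^ i * decayFactor C D i ^ k * (1 + k * (D i : ℝ)⁻¹)
        ≤ (1 / 4) ^ i * decayFactor C D i ^ k * (k + k * 1) := by
          gcongr
          exact inv_le_one_of_one_le₀ hD
      _ = 2 * (1 / 4) ^ i * (decayFactor C D i ^ k * k) := by ring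
      _ ≤ 2 * (1 / 2) ^ i * (1 / 2) ^ j := by
          gcongr
          · norm_num
          · exact h.decayFactor_pow_mul_le_of_quietTime_le hij hk.1
      _ = 2 * (1 / 2) ^ j * (1 / 2) ^ i := by ring
  · have hkD : (k : ℝ) ≤ D i := by
      exact_mod_cast hk.2.le.trans ((h.succ_mul_quietTime_le j).trans (h.monotone hji))
    calc (1 / 4) ^ i * decayFactor C D i ^ k * (1 + k * (D i : ℝ)⁻¹)
        ≤ (1 / 4) ^ i * 1 * (1 + 1) := by
          gcongr
          · exact pow_le_one₀ (decayFactor_nonneg C D i) (decayFactor_le_one C D i)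
          · exact mul_inv_le_one_of_le₀ hkD (by positivity)
      _ = 2 * (1 / 2) ^ i * (1 / 2) ^ i := by
          rw [show (1 / 4 : ℝ) = 1 / 2 * (1 / 2) by norm_num, mul_pow]
          ring
      _ ≤ 2 * (1 / 2) ^ j * (1 / 2) ^ i := by
          have : ((1 : ℝ) / 2) ^ i ≤ (1 / 2) ^ j :=
            pow_le_pow_of_le_one (by norm_num) (by norm_num) hji.le
          gcongr

lemma abs_decayFactor_sub_one_mul_add_le (h : IsSeparated C D) (j : ℕ) :
    |decayFactor C D j - 1| * (C j + C j) + decayFactor C D j * (D j : ℝ)⁻¹ * C j ≤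
      2 * C j / D j := by
  have hD : (0 : ℝ) < D j := by exact_mod_cast h.D_pos j
  have hrelax : 2 * (D j : ℝ) ≤ relaxTime C D j := by exact_mod_cast h.two_mul_le_relaxTime j
  have hle := decayFactor_le_one C D j
  calc |decayFactor C D j - 1| * (C j + C j) + decayFactor C D j * (D j : ℝ)⁻¹ * C j
      ≤ 1 / (2 * D j) * (C j + C j) + 1 * (D j : ℝ)⁻¹ * C j := by
        gcongr
        exact (abs_decayFactor_sub_one_le C D j).trans (by gcongr)
    _ = 2 * C j / D j := by
        field_simp
        ring

end IsSeparated

lemma exists_seq_forall_le_and_forall_le_succ (B : ℕ → ℕ) (F : ℕ → ℕ → ℕ) :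
    ∃ D : ℕ → ℕ, (∀ j, B j ≤ D j) ∧ ∀ j, F j (D j) ≤ D (j + 1) := by
  let D : ℕ → ℕ := Nat.rec (B 0) fun j d => max (B (j + 1)) (F j d)
  refine ⟨D, fun j => ?_, fun j => le_max_right _ _⟩
  cases j with
  | zero => exact le_rfl
  | succ j => exact le_max_left _ _

lemma exists_isSeparated (hC : ∀ j, 0 < C j) {η : ℝ} (hη : 0 < η) :
    ∃ D : ℕ → ℕ, IsSeparated C D ∧ ∀ j, 2 * (C j : ℝ) / D j ≤ η / 2 / 2 ^ j := by
  choose B hB using fun j => exists_nat_ge (2 * (C j : ℝ) / (η / 2 / 2 ^ j))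
  obtain ⟨D, hBD, hgrowth⟩ := exists_seq_forall_le_and_forall_le_succ B
    fun j d => (j + 1) * quietTime C (fun _ => d) j
  have hD (j : ℕ) : 2 * (C j : ℝ) / (η / 2 / 2 ^ j) ≤ D j :=
    (hB j).trans (by exact_mod_cast hBD j)
  have hDpos (j : ℕ) : (0 : ℝ) < D j := by
    have : (0 : ℝ) < C j := by exact_mod_cast hC j
    exact lt_of_lt_of_le (by positivity) (hD j)
  refine ⟨D, ⟨hC, fun j => by exact_mod_cast hDpos j, hgrowth⟩, fun j => ?_⟩
  exact (div_le_comm₀ (by positivity) (hDpos j)).1 (hD j)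

end TimeScale

section Construction

variable {𝕜 E : Type*} [RCLike 𝕜] [NormedAddCommGroup E] [NormedSpace 𝕜 E] [CompleteSpace E]
  {e : ℕ ⊕ ℕ → E} {φ : ℕ ⊕ ℕ → StrongDual 𝕜 E} {C D : ℕ → ℕ}

namespace IsSeparated

lemma exists_compact_hasJordanBlocks (h : IsSeparated C D) (hbi : IsBiorthogonal e φ)
    (hunit : ∀ i, ‖e i‖ = 1) (hφ : ∀ j, ‖φ (.inl j)‖ ≤ C j ∧ ‖φ (.inr j)‖ ≤ C j) {η : ℝ}
    (hη : ∀ j, 2 * (C j : ℝ) / D j ≤ η / 2 / 2 ^ j) :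
    ∃ K : E →L[𝕜] E, IsCompactOperator K ∧ ‖K‖ ≤ η ∧
      HasJordanBlocks (1 + K) e (fun j => (decayFactor C D j : 𝕜)) fun j => (D j : 𝕜)⁻¹ := by
  refine hbi.exists_compact_hasJordanBlocks hunit (hasSum_geometric_two' η) fun j => ?_
  have hdecay := decayFactor_nonneg C D j
  have hsub : ‖(decayFactor C D j : 𝕜) - 1‖ = |decayFactor C D j - 1| := by
    rw [← RCLike.norm_ofReal (K := 𝕜)]
    push_cast
    rfl
  rw [hsub, norm_mul, norm_inv, RCLike.norm_ofReal, RCLike.norm_natCast,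
    abs_of_nonneg hdecay]
  refine le_trans ?_ ((h.abs_decayFactor_sub_one_mul_add_le j).trans (hη j))
  gcongr
  exacts [(hφ j).1, (hφ j).2, (hφ j).2]

lemma distributionallyChaotic_of_hasJordanBlocks (h : IsSeparated C D) (hbi : IsBiorthogonal e φ)
    (hunit : ∀ i, ‖e i‖ = 1) (hφ : ∀ j, ‖φ (.inl j)‖ ≤ C j) {T : E →L[𝕜] E}
    (hT : HasJordanBlocks T e (fun j => (decayFactor C D j : 𝕜)) fun j => (D j : 𝕜)⁻¹) :
    DistributionallyChaotic T := by
  let w (i : ℕ) : 𝕜 := (1 / 4) ^ i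
  have hw_norm (i : ℕ) : ‖w i‖ = (1 / 4) ^ i := by
    simp [w]
  have ha_norm (i : ℕ) : ‖(decayFactor C D i : 𝕜)‖ = decayFactor C D i := by
    rw [RCLike.norm_ofReal, abs_of_nonneg (decayFactor_nonneg C D _)]
  have hd_norm (i : ℕ) : ‖(D i : 𝕜)⁻¹‖ = (D i : ℝ)⁻¹ := by
    rw [norm_inv, RCLike.norm_natCast]
  have hw : Summable fun i => w i • e (.inr i) := by
    refine .of_norm ?_
    simpa only [norm_smul, hw_norm, hunit, mul_one] using
      summable_geometric_of_lt_one (by norm_num) (by norm_num : (1 / 4 : ℝ) < 1)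
  have hb : Tendsto (fun j : ℕ => 2 * ((1 : ℝ) / 2) ^ j * 2) atTop (𝓝 0) := by
    simpa using ((tendsto_pow_atTop_nhds_zero_of_lt_one (r := (1 : ℝ) / 2) (by norm_num)
      (by norm_num)).const_mul 2).mul_const 2
  refine distributionallyChaotic_of_norm_windows (x := ∑' i, w i • e (.inr i))
    h.quietTime_pos h.loudTime_pos hb one_pos (fun j k hk => ?_) fun j k hk => ?_
  · refine hT.norm_pow_apply_le hunit hw (hasSum_geometric_two.mul_left (2 * (1 / 2) ^ j))
      fun i => ?_
    rw [hw_norm, ha_norm, hd_norm]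
    exact h.block_growth_le_of_mem_Ico_quietTime hk i
  · have hloud := hT.le_norm_mul_norm_pow_apply hbi hw k j
    rw [hw_norm, ha_norm, hd_norm] at hloud
    have hC : (0 : ℝ) < C j := by exact_mod_cast h.C_pos j
    refine le_of_mul_le_mul_left ?_ hC
    calc (C j : ℝ) * 1 ≤ ‖φ (.inl j)‖ * ‖(T ^ k) (∑' i, w i • e (.inr i))‖ :=
          (mul_one _).trans_le ((h.C_le_of_mem_Ico_loudTime hk).trans hloud)
      _ ≤ _ := by
          gcongr
          exact hφ j

end IsSeparated

end Construction

lemma not_finiteDimensional_lp_two {ι 𝕜 : Type*} [Infinite ι] [RCLike 𝕜] :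
    ¬FiniteDimensional 𝕜 (lp (fun _ : ι => 𝕜) 2) := by
  intro hfin
  have hbasis : HilbertBasis ι 𝕜 (lp (fun _ : ι => 𝕜) 2) := .ofRepr (.refl 𝕜 _)
  have : Finite ι := hbasis.orthonormal.linearIndependent.finite_of_isNoetherian
  exact not_finite ι

end DistributionalChaos

theorem stmt_16_general {𝕜 E : Type*} [RCLike 𝕜] [NormedAddCommGroup E] [NormedSpace 𝕜 E]
    [CompleteSpace E] (hE : ¬FiniteDimensional 𝕜 E) (ε : ℝ) (hε : 0 < ε) :
    ∃ K : E →L[𝕜] E, IsCompactOperator K ∧ ‖K‖ < ε ∧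
      DistributionallyChaotic (fun x => ((1 : E →L[𝕜] E) + K) x) := by
  obtain ⟨e, φ, hunit, hbi⟩ := DistributionalChaos.exists_isBiorthogonal (ℕ ⊕ ℕ) hE
  choose C hC using fun j => exists_nat_gt (max ‖φ (.inl j)‖ ‖φ (.inr j)‖)
  have hCpos (j : ℕ) : 0 < C j := by
    exact_mod_cast (le_max_of_le_left (norm_nonneg _)).trans_lt (hC j)
  have hφ (j : ℕ) : ‖φ (.inl j)‖ ≤ C j ∧ ‖φ (.inr j)‖ ≤ C j := max_le_iff.1 (hC j).le
  obtain ⟨D, hsep, hD⟩ := DistributionalChaos.exists_isSeparated hCpos (half_pos hε)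
  obtain ⟨K, hcompact, hnorm, hblocks⟩ := hsep.exists_compact_hasJordanBlocks hbi hunit hφ hD
  exact ⟨K, hcompact, hnorm.trans_lt (half_lt_self hε),
    hsep.distributionallyChaotic_of_hasJordanBlocks hbi hunit (fun j => (hφ j).1) hblocks⟩

/-- For every ε > 0 there is a compact operator K on ℓ²(ℕ,ℂ) with
‖K‖ < ε such that I + K is distributionally chaotic. -/
theorem stmt_16 (ε : ℝ) (hε : 0 < ε) :
    ∃ K : lp (fun _ : ℕ => ℂ) 2 →L[ℂ] lp (fun _ : ℕ => ℂ) 2,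
      IsCompactOperator (⇑K) ∧ ‖K‖ < ε ∧
      DistributionallyChaotic (fun x => ((1 : lp (fun _ : ℕ => ℂ) 2 →L[ℂ]
        lp (fun _ : ℕ => ℂ) 2) + K) x) := by
  exact stmt_16_general DistributionalChaos.not_finiteDimensional_lp_two ε hε
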